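/- Let n ≥ 2 and let μ = f·Lⁿ ∈ 𝒲(ℝⁿ) be a PS measure. Then for any v, η ∈ S^{n−1} and any Lebesgue-measurable set E ⊆ ℝⁿ, Per_μ(H_μ(E, η)) = Per_μ(H_μ(E, v)), and the half-spaces H_μ(E, η), η ∈ S^{n−1}, are minimal for μ-perimeter among all measurable sets F with μ(F) = μ(E), i.e. Per_μ(H_μ(E, η)) ≤ Per_μ(F) for all such F. In particular, for any u ∈ S^{n−1} and c ∈ ℝ, the half-space H(u, c) satisfies Per_μ(H(u, c)) ≤ Per_μ(F) for all measurable F with μ(F) = μ(H(u, c)). -/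

import Mathlib

open MeasureTheory Set Filter
open scoped ENNReal RealInnerProductSpace Topology

noncomputable section

/-- Euclidean space ℝⁿ. -/
abbrev En (n : ℕ) := EuclideanSpace ℝ (Fin n)

/-- Divergence of a vector field on ℝⁿ. -/
noncomputable def dvg {n : ℕ} (φ : En n → En n) (x : En n) : ℝ :=
  ∑ i : Fin n, fderiv ℝ φ x (EuclideanSpace.single i 1) i

/-- `f'` is the (weak) gradient of `f`, and both are locally integrable;
this encodes `f ∈ W^{1,1}_loc(ℝⁿ)` with weak gradient `∇f = f'`. -/
def HasWeakGrad {n : ℕ} (f : En n → ℝ) (f' : En n → En n) : Prop :=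
  LocallyIntegrable f volume ∧ LocallyIntegrable f' volume ∧
    ∀ φ : En n → En n, ContDiff ℝ 1 φ → HasCompactSupport φ →
      (∫ x, f x * dvg φ x) = - ∫ x, ⟪φ x, f' x⟫

/-- Membership of `μ = f·Lⁿ` in the class `𝒲(ℝⁿ)`: the density `f` is non-negative,
integrable and lies in `W^{1,1}_loc(ℝⁿ)` with weak gradient `f'`. -/
def MemW {n : ℕ} (f : En n → ℝ) (f' : En n → En n) : Prop :=
  (∀ x, 0 ≤ f x) ∧ Integrable f volume ∧ HasWeakGrad f f'

/-- Admissible test vector fields: `C¹`, compactly supported in `U`, sup-norm at most 1. -/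
def IsTestField {n : ℕ} (U : Set (En n)) (φ : En n → En n) : Prop :=
  ContDiff ℝ 1 φ ∧ HasCompactSupport φ ∧ tsupport φ ⊆ U ∧ ∀ x, ‖φ x‖ ≤ 1

/-- The weighted variation `‖g‖_{BV_μ(U)}` (valued in `ℝ≥0∞`;
membership in `BV_μ(U)` means that this quantity is finite). -/
noncomputable def bvVar {n : ℕ} (f : En n → ℝ) (f' : En n → En n) (U : Set (En n))
    (g : En n → ℝ) : ℝ≥0∞ :=
  ⨆ (φ : En n → En n) (_ : IsTestField U φ),
    ENNReal.ofReal (∫ x in U, g x * (f x * dvg φ x + ⟪φ x, f' x⟫))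

/-- The weighted perimeter `Per_μ(E; U)`. -/
noncomputable def perim {n : ℕ} (f : En n → ℝ) (f' : En n → En n) (U : Set (En n))
    (E : Set (En n)) : ℝ≥0∞ :=
  bvVar f f' U (E.indicator fun _ => (1 : ℝ))

/-- The measure `μ = f·Lⁿ`. -/
noncomputable def muM {n : ℕ} (f : En n → ℝ) : Measure (En n) :=
  volume.withDensity fun x => ENNReal.ofReal (f x)

/-- One-dimensional generalized Ehrhard symmetrization of `A ⊆ ℝ` in direction `v ∈ {−1,+1}`
with respect to a measure `ν` on `ℝ`: the largest half-line `{t : v·t ≥ c}` of `ν`-measure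
`ν A` (with the conventions `∅`, `ℝ` when `c = ±∞`). -/
def ehrhard1D (ν : Measure ℝ) (v : ℝ) (A : Set ℝ) : Set ℝ :=
  {t | ∀ b : ℝ, (∀ c : ℝ, ν {y | c ≤ v * y} ≤ ν A → b ≤ c) → b ≤ v * t}

/-- The weighted measure `f·H¹` on the fiber `{x + t·v : t ∈ ℝ}`, identified with `ℝ`. -/
noncomputable def fiberMeasure {n : ℕ} (f : En n → ℝ) (x v : En n) : Measure ℝ :=
  (volume : Measure ℝ).withDensity fun t => ENNReal.ofReal (f (x + t • v))

/-- Generalized `v`-Ehrhard symmetrization of `E ⊆ ℝⁿ` with respect to `μ = f·Lⁿ`: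
on each fiber over `v^⊥` one replaces `E` by the largest half-line in direction `v`
of the same weighted measure. -/
def ehrhardSymm {n : ℕ} (f : En n → ℝ) (v : En n) (E : Set (En n)) : Set (En n) :=
  {z | ⟪z, v⟫ ∈
      ehrhard1D (fiberMeasure f (z - ⟪z, v⟫ • v) v) 1
        {t | (z - ⟪z, v⟫ • v) + t • v ∈ E}}

/-- `μ = f·Lⁿ` is a perimeter symmetrization (PS) measure: generalized Ehrhard
symmetrization does not increase the weighted perimeter of sets of finite `μ`-perimeter. -/
def IsPSMeasure {n : ℕ} (f : En n → ℝ) (f' : En n → En n) : Prop :=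
  ∀ v : En n, ‖v‖ = 1 → ∀ E : Set (En n), NullMeasurableSet E volume →
    perim f f' univ E < ⊤ →
      perim f f' univ (ehrhardSymm f v E) ≤ perim f f' univ E

/-- The half-space `H(v, r) = {x : x·v ≥ r}`. -/
def halfSpace {n : ℕ} (v : En n) (r : ℝ) : Set (En n) := {x | r ≤ ⟪x, v⟫}

/-- `H_μ(E, v)`: the largest half-space in direction `v` with `μ`-measure `μ(E)`. -/
def halfSpaceOf {n : ℕ} (f : En n → ℝ) (E : Set (En n)) (v : En n) : Set (En n) :=
  {x | ∀ b : ℝ, (∀ c : ℝ, muM f (halfSpace v c) ≤ muM f E → b ≤ c) → b ≤ ⟪x, v⟫}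

/-- `g'` is the weak derivative of `g : ℝ → ℝ` (so `g ∈ W^{1,1}_loc(ℝ)`). -/
def HasWeakDeriv (g g' : ℝ → ℝ) : Prop :=
  LocallyIntegrable g volume ∧ LocallyIntegrable g' volume ∧
    ∀ φ : ℝ → ℝ, ContDiff ℝ 1 φ → HasCompactSupport φ →
      (∫ t, g t * deriv φ t) = - ∫ t, φ t * g' t

/-!
Fix a half-space `H` and a competitor `F` of finite perimeter `P` with `μ(F) = μ(H)`. The class of
sets of mass `μ(H)` and perimeter at most `P` contains `F` and is stable under all symmetrizations.
Let `q` be the infimum of `μ(E \ H)` over this class. Symmetrizing `E` in a direction `w / |w|`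
pointing into `H` moves mass of `E \ H` into `H \ E`: it decreases `μ(E \ H)` by at least
`∫ min (f 1_{E \ H} (x)) (f 1_{H \ E} (x + w)) dx`. For a nearly optimal `E` this overlap is small
for all `w` simultaneously. Integrating over `w` in a large ball, after truncating `f` to a bounded
set where it is bounded, bounds `μ(E \ H) μ(H \ E)` up to small errors. Both factors are at least
`q`, so `q = 0`.

Hence sets of perimeter at most `P` converge to `H` in `μ`-measure. The perimeter is lower
semicontinuous for this convergence because the finite measure with density `|f div φ + φ · ∇f|` is
absolutely continuous with respect to `μ`: `∇f = 0` almost everywhere on `{f = 0}`, the minimum set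
of `f`. So `Per_μ(H) ≤ P`. All the half-spaces `H_μ(E, η)` have mass `μ(E)`, hence each is
minimal in the mass class of the others.
-/

lemma measure_sdiff_comm_of_measure_eq {α : Type*} [MeasurableSpace α] {ν : Measure α}
    [IsFiniteMeasure ν] {A B : Set α} (hA : MeasurableSet A) (hB : MeasurableSet B)
    (h : ν A = ν B) : ν (A \ B) = ν (B \ A) := by
  rw [← measure_sdiff_add_inter A hB, ← measure_sdiff_add_inter B hA, inter_comm] at h
  exact (ENNReal.add_left_inj (measure_ne_top _ _)).1 h

/-! ### Half-lines of prescribed mass -/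

section HalfLine

/-- The largest half-line of `ν`-mass at most `m`, possibly empty or everything. For
`m = ν A` it is the one-dimensional symmetrization of `A`. -/
def halfLineOfMass {α : Type*} [Preorder α] [MeasurableSpace α] (ν : Measure α) (m : ℝ≥0∞) :
    Set α :=
  {t | ν (Ici t) ≤ m}

lemma isUpperSet_halfLineOfMass {α : Type*} [Preorder α] [MeasurableSpace α] (ν : Measure α)
    (m : ℝ≥0∞) : IsUpperSet (halfLineOfMass ν m) :=
  fun _ _ hab ha => (measure_mono (Ici_subset_Ici.2 hab)).trans ha

lemma upperBounds_lowerBounds_setOf_measure_Ici_le {α : Type*} [MeasurableSpace α]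
    [ConditionallyCompleteLinearOrder α] [TopologicalSpace α] [OrderTopology α]
    [DenselyOrdered α] [NoMaxOrder α] [FirstCountableTopology α] (ν : Measure α)
    [NullSingletonClass ν] (m : ℝ≥0∞) :
    upperBounds (lowerBounds {c | ν (Ici c) ≤ m}) = halfLineOfMass ν m := by
  refine Subset.antisymm (fun t ht => ?_) fun t ht b hb => hb ht
  obtain ⟨u, hu, htu, hlim⟩ := exists_seq_strictAnti_tendsto t
  have hmass : ∀ i, ν (Ici (u i)) ≤ m := fun i => by
    by_contra hi
    refine (htu i).not_ge (ht fun c hc => le_of_not_gt fun hcu => hi ?_)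
    exact isUpperSet_halfLineOfMass ν m hcu.le hc
  change ν (Ici t) ≤ m
  rw [← measure_congr Ioi_ae_eq_Ici, ← iUnion_Ici_eq_Ioi_of_lt_of_tendsto htu hlim,
    Monotone.measure_iUnion fun i j hij => Ici_subset_Ici.2 (hu.antitone hij)]
  exact iSup_le hmass

variable {α : Type*} [LinearOrder α] [MeasurableSpace α] [TopologicalSpace α]
  [OrderClosedTopology α] [OpensMeasurableSpace α]

lemma measurableSet_halfLineOfMass (ν : Measure α) (m : ℝ≥0∞) :
    MeasurableSet (halfLineOfMass ν m) :=
  (isUpperSet_halfLineOfMass ν m).ordConnected.measurableSet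

variable (ν : Measure α) [IsFiniteMeasure ν] [ν.InnerRegularCompactLTTop]

-- A compact subset lies in the half-line starting at its least element.
lemma measure_halfLineOfMass_le (m : ℝ≥0∞) : ν (halfLineOfMass ν m) ≤ m := by
  rw [(measurableSet_halfLineOfMass ν m).measure_eq_iSup_isCompact_of_ne_top (measure_ne_top _ _)]
  refine iSup₂_le fun K hKS => iSup_le fun hK => ?_
  rcases K.eq_empty_or_nonempty with rfl | hne
  · simp
  obtain ⟨t, htK, ht⟩ := hK.exists_isLeast hne
  exact (measure_mono fun y hy => ht hy).trans (hKS htK)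

variable [NullSingletonClass ν]

lemma measure_compl_halfLineOfMass_le (m : ℝ≥0∞) : ν (halfLineOfMass ν m)ᶜ ≤ ν univ - m := by
  rw [(measurableSet_halfLineOfMass ν m).compl.measure_eq_iSup_isCompact_of_ne_top
    (measure_ne_top _ _)]
  refine iSup₂_le fun K hKS => iSup_le fun hK => ?_
  rcases K.eq_empty_or_nonempty with rfl | hne
  · simp
  obtain ⟨t, htK, ht⟩ := hK.exists_isGreatest hne
  have hlt : ¬ν (Ici t) ≤ m := hKS htK
  have hm : m ≤ ν (Ioi t) := (not_le.1 hlt).le.trans (measure_congr Ioi_ae_eq_Ici).ge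
  calc ν K ≤ ν (Iic t) := measure_mono fun y hy => ht hy
    _ = ν univ - ν (Ioi t) := by
      rw [← compl_Ioi, measure_compl measurableSet_Ioi (measure_ne_top _ _)]
    _ ≤ ν univ - m := tsub_le_tsub_left hm _

lemma measure_halfLineOfMass {m : ℝ≥0∞} (hm : m ≤ ν univ) : ν (halfLineOfMass ν m) = m := by
  refine (measure_halfLineOfMass_le ν m).antisymm ?_
  have h := measure_compl_halfLineOfMass_le ν m
  rw [measure_compl (measurableSet_halfLineOfMass ν m) (measure_ne_top _ _)] at h
  exact (ENNReal.sub_le_sub_iff_left hm (measure_ne_top _ _)).1 h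

lemma measure_halfLineOfMass_sdiff_add_min_le {A T : Set α} (hA : MeasurableSet A)
    (hT : IsUpperSet T) :
    ν (halfLineOfMass ν (ν A) \ T) + min (ν (A \ T)) (ν (T \ A)) ≤ ν (A \ T) := by
  have hTm : MeasurableSet T := hT.ordConnected.measurableSet
  rcases (isUpperSet_halfLineOfMass ν (ν A)).total hT with h | h
  · rw [sdiff_eq_empty.2 h, measure_empty, zero_add]
    exact min_le_left _ _
  refine (add_le_add_right (min_le_right _ _) _).trans ?_
  refine (ENNReal.add_le_add_iff_right (measure_ne_top ν (A ∩ T))).1 (le_of_eq ?_)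
  calc ν (halfLineOfMass ν (ν A) \ T) + ν (T \ A) + ν (A ∩ T)
      = ν (halfLineOfMass ν (ν A) \ T) + ν (halfLineOfMass ν (ν A) ∩ T) := by
        rw [add_assoc, inter_comm, measure_sdiff_add_inter T hA, inter_eq_self_of_subset_right h]
    _ = ν (A \ T) + ν (A ∩ T) := by
        rw [measure_sdiff_add_inter _ hTm, measure_sdiff_add_inter _ hTm,
          measure_halfLineOfMass ν (measure_mono (subset_univ _))]

end HalfLine

/-! ### Integration along parallel lines -/

section Lines

variable {V : Type*} [AddCommGroup V] [Module ℝ V]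

/-- The measure with density `g` on the line through `z` in direction `v`, as a measure on the
displacement `s` of the point `z + s • v` from `z`. -/
def lineMeasure (g : V → ℝ≥0∞) (v z : V) : Measure ℝ := volume.withDensity fun s => g (z + s • v)

instance (g : V → ℝ≥0∞) (v z : V) : NullSingletonClass (lineMeasure g v z) := by
  unfold lineMeasure
  infer_instance

lemma measurePreserving_add_left_lineMeasure (g : V → ℝ≥0∞) (v z : V) (t : ℝ) :
    MeasurePreserving (t + ·) (lineMeasure g v (z + t • v)) (lineMeasure g v z) := by
  refine ⟨measurable_const_add t, Measure.ext fun B hB => ?_⟩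
  have hm : MeasurableSet ((t + ·) ⁻¹' B) := measurable_const_add t hB
  rw [Measure.map_apply (measurable_const_add t) hB, lineMeasure, lineMeasure,
    withDensity_apply _ hm, withDensity_apply _ hB, ← lintegral_indicator hm,
    ← lintegral_indicator hB, ← lintegral_add_left_eq_self (B.indicator fun s => g (z + s • v)) t]
  simp only [indicator, mem_preimage, add_smul, add_assoc]
  rfl

lemma lineMeasure_add_smul_preimage (g : V → ℝ≥0∞) (v z : V) (t : ℝ) (B : Set ℝ) :
    lineMeasure g v (z + t • v) ((t + ·) ⁻¹' B) = lineMeasure g v z B :=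
  (measurePreserving_add_left_lineMeasure g v z t).measure_preimage_emb
    (measurableEmbedding_addLeft t) B

end Lines

section LineIntegrals

variable {V : Type*} [NormedAddCommGroup V] [NormedSpace ℝ V] [MeasurableSpace V] [BorelSpace V]

lemma measurable_add_smul (v z : V) : Measurable fun s : ℝ => z + s • v := by fun_prop

lemma lineMeasure_preimage (g : V → ℝ≥0∞) (v z : V) {B : Set V} (hB : MeasurableSet B) :
    lineMeasure g v z ((fun s : ℝ => z + s • v) ⁻¹' B) =
      ∫⁻ s : ℝ, B.indicator g (z + s • v) := by
  rw [lineMeasure, withDensity_apply _ (measurable_add_smul v z hB),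
    ← lintegral_indicator (measurable_add_smul v z hB)]
  rfl

variable [FiniteDimensional ℝ V]

lemma measurable_lintegral_line {h : V → ℝ≥0∞} (hh : Measurable h) (v : V) :
    Measurable fun z => ∫⁻ s : ℝ, h (z + s • v) :=
  Measurable.lintegral_prod_right' (f := fun p : V × ℝ => h (p.1 + p.2 • v)) (by fun_prop)

variable (μ : Measure V) [μ.IsAddHaarMeasure]

-- Every line meets the strip `ℓ ⁻¹' Icc 0 1` in a segment of length one.
lemma lintegral_eq_setLIntegral_lintegral_line (ℓ : V →L[ℝ] ℝ) {v : V} (hv : ℓ v = 1)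
    {h : V → ℝ≥0∞} (hh : Measurable h) :
    ∫⁻ z, h z ∂μ = ∫⁻ z in ℓ ⁻¹' Icc 0 1, (∫⁻ s : ℝ, h (z + s • v)) ∂μ := by
  have hstrip : MeasurableSet (ℓ ⁻¹' Icc 0 1) := ℓ.measurable measurableSet_Icc
  set χ : V → ℝ≥0∞ := (ℓ ⁻¹' Icc 0 1).indicator 1
  have hχ : Measurable χ := measurable_one.indicator hstrip
  have segment : ∀ z, ∫⁻ s : ℝ, χ (z - s • v) = 1 := fun z => by
    have : ∀ s : ℝ, χ (z - s • v) = (Icc (ℓ z - 1) (ℓ z)).indicator 1 s := fun s => by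
      refine indicator_eq_indicator ?_ rfl
      simp only [mem_preimage, map_sub, map_smul, hv, smul_eq_mul, mul_one, mem_Icc]
      constructor <;> rintro ⟨h₁, h₂⟩ <;> constructor <;> linarith
    simp [this, lintegral_indicator_one measurableSet_Icc]
  symm
  calc ∫⁻ z in ℓ ⁻¹' Icc 0 1, (∫⁻ s : ℝ, h (z + s • v)) ∂μ
      = ∫⁻ z, (∫⁻ s : ℝ, χ z * h (z + s • v)) ∂μ := by
        rw [← lintegral_indicator hstrip]
        refine lintegral_congr fun z => ?_
        rw [lintegral_const_mul _ (by fun_prop)]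
        by_cases hz : z ∈ ℓ ⁻¹' Icc 0 1 <;> simp [χ, hz]
    _ = ∫⁻ s : ℝ, ∫⁻ z, χ z * h (z + s • v) ∂μ :=
        lintegral_lintegral_swap (by fun_prop)
    _ = ∫⁻ s : ℝ, ∫⁻ z, χ (z - s • v) * h z ∂μ := lintegral_congr fun s => by
        rw [← lintegral_add_right_eq_self (fun z => χ (z - s • v) * h z) (s • v)]
        simp only [add_sub_cancel_right]
    _ = ∫⁻ z, (∫⁻ s : ℝ, χ (z - s • v) * h z) ∂μ :=
        lintegral_lintegral_swap (by fun_prop)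
    _ = ∫⁻ z, h z ∂μ := lintegral_congr fun z => by
        rw [lintegral_mul_const _ (by fun_prop), segment, one_mul]

lemma lintegral_mono_of_forall_line {g h₁ h₂ : V → ℝ≥0∞} (hg : Measurable g)
    (hfin : ∫⁻ z, g z ∂μ ≠ ⊤) (hh₁ : Measurable h₁) (hh₂ : Measurable h₂) {v : V} (hv : v ≠ 0)
    (hle : ∀ z, IsFiniteMeasure (lineMeasure g v z) →
      ∫⁻ s : ℝ, h₁ (z + s • v) ≤ ∫⁻ s : ℝ, h₂ (z + s • v)) :
    ∫⁻ z, h₁ z ∂μ ≤ ∫⁻ z, h₂ z ∂μ := by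
  obtain ⟨ℓ, hℓ⟩ := SeparatingDual.exists_eq_one (R := ℝ) hv
  rw [lintegral_eq_setLIntegral_lintegral_line μ ℓ hℓ hg] at hfin
  rw [lintegral_eq_setLIntegral_lintegral_line μ ℓ hℓ hh₁,
    lintegral_eq_setLIntegral_lintegral_line μ ℓ hℓ hh₂]
  refine lintegral_mono_ae ?_
  filter_upwards [ae_lt_top (measurable_lintegral_line hg v) hfin] with z hz
  refine hle z ⟨?_⟩
  rwa [lineMeasure, withDensity_apply _ MeasurableSet.univ, Measure.restrict_univ]

variable {μ} in
lemma lineMeasure_ae_congr {g₁ g₂ : V → ℝ≥0∞} (h : g₁ =ᵐ[μ] g₂) (v : V) :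
    ∀ᵐ z ∂μ, lineMeasure g₁ v z = lineMeasure g₂ v z := by
  let N : Set V := toMeasurable μ {x | g₁ x ≠ g₂ x}
  have hN : ∀ᵐ x ∂μ, x ∈ Nᶜ :=
    compl_mem_ae_iff.2 ((measure_toMeasurable _).trans (ae_iff.1 h))
  have hline := (ae_ae_add_linearMap_mem_iff (LinearMap.toSpanSingleton ℝ V v) volume μ
    (measurableSet_toMeasurable _ _).compl).2 hN
  filter_upwards [hline] with z hz
  refine withDensity_congr_ae (hz.mono fun s hs => ?_)
  by_contra hne
  exact hs (subset_toMeasurable _ _ hne)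

end LineIntegrals

/-! ### Symmetrization along lines -/

section LineSymm

variable {V : Type*} [AddCommGroup V] [Module ℝ V]

/-- Ehrhard symmetrization of `E` in direction `v` for the density `g`: a point is kept when the
part of its line lying ahead of it weighs at most as much as the part of the line inside `E`. -/
def lineSymm (g : V → ℝ≥0∞) (v : V) (E : Set V) : Set V :=
  {z | lineMeasure g v z (Ici 0) ≤ lineMeasure g v z ((fun s : ℝ => z + s • v) ⁻¹' E)}

lemma preimage_lineSymm (g : V → ℝ≥0∞) (v z : V) (E : Set V) :
    (fun s : ℝ => z + s • v) ⁻¹' lineSymm g v E =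
      halfLineOfMass (lineMeasure g v z)
        (lineMeasure g v z ((fun s : ℝ => z + s • v) ⁻¹' E)) := by
  ext t
  have hahead : (t + ·) ⁻¹' Ici t = Ici 0 := by ext s; simp
  have htrace : (fun s : ℝ => z + t • v + s • v) ⁻¹' E =
      (t + ·) ⁻¹' ((fun s : ℝ => z + s • v) ⁻¹' E) := by
    ext s
    simp [add_smul, add_assoc]
  rw [mem_preimage, lineSymm, mem_ofPred_eq, htrace, ← hahead,
    lineMeasure_add_smul_preimage, lineMeasure_add_smul_preimage]
  rfl

end LineSymm

/-- The mass common to `a` and to the translate of `b` by `-w`. -/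
def translationOverlap {V : Type*} [Add V] [MeasurableSpace V] (μ : Measure V)
    (a b : V → ℝ≥0∞) (w : V) : ℝ≥0∞ :=
  ∫⁻ x, min (a x) (b (x + w)) ∂μ

section SymmetrizationGain

variable {V : Type*} [NormedAddCommGroup V] [NormedSpace ℝ V] [FiniteDimensional ℝ V]
  [MeasurableSpace V] [BorelSpace V] (μ : Measure V) [μ.IsAddHaarMeasure] {g : V → ℝ≥0∞}

lemma measurableSet_lineSymm (hg : Measurable g) (v : V) {E : Set V} (hE : MeasurableSet E) :
    MeasurableSet (lineSymm g v E) := by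
  refine measurableSet_le ?_ ?_
  · simp only [lineMeasure, withDensity_apply _ measurableSet_Ici]
    exact Measurable.lintegral_prod_right' (f := fun p : V × ℝ => g (p.1 + p.2 • v)) (by fun_prop)
  · simp only [lineMeasure_preimage g v _ hE]
    exact measurable_lintegral_line (hg.indicator hE) v

variable {μ} in
lemma lineSymm_ae_congr {g₁ g₂ : V → ℝ≥0∞} (h : g₁ =ᵐ[μ] g₂) (v : V) (E : Set V) :
    lineSymm g₁ v E =ᵐ[μ] lineSymm g₂ v E := by
  rw [eventuallyEq_set]
  filter_upwards [lineMeasure_ae_congr h v] with z hz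
  rw [lineSymm, lineSymm, mem_ofPred_eq, mem_ofPred_eq, hz]

lemma withDensity_lineSymm (hg : Measurable g) (hfin : ∫⁻ z, g z ∂μ ≠ ⊤) {v : V} (hv : v ≠ 0)
    {E : Set V} (hE : MeasurableSet E) :
    μ.withDensity g (lineSymm g v E) = μ.withDensity g E := by
  have hS := measurableSet_lineSymm hg v hE
  have hline : ∀ z, IsFiniteMeasure (lineMeasure g v z) →
      ∫⁻ s : ℝ, (lineSymm g v E).indicator g (z + s • v) =
        ∫⁻ s : ℝ, E.indicator g (z + s • v) := fun z _ => by
    rw [← lineMeasure_preimage g v z hS, ← lineMeasure_preimage g v z hE, preimage_lineSymm]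
    exact measure_halfLineOfMass _ (measure_mono (subset_univ _))
  rw [withDensity_apply _ hS, withDensity_apply _ hE, ← lintegral_indicator hS,
    ← lintegral_indicator hE]
  exact le_antisymm
    (lintegral_mono_of_forall_line μ hg hfin (hg.indicator hS) (hg.indicator hE) hv
      fun z hz => (hline z hz).le)
    (lintegral_mono_of_forall_line μ hg hfin (hg.indicator hE) (hg.indicator hS) hv
      fun z hz => (hline z hz).ge)

-- On each line, the symmetrized set and the half-line cut out by `ℓ ⁻¹' T` are nested.
lemma withDensity_lineSymm_sdiff_add_translationOverlap_le (hg : Measurable g)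
    (hfin : ∫⁻ z, g z ∂μ ≠ ⊤) {ℓ : V →L[ℝ] ℝ} {v : V} (hv : 0 < ℓ v) {T : Set ℝ}
    (hT : IsUpperSet T) {E : Set V} (hE : MeasurableSet E) (r : ℝ) :
    μ.withDensity g (lineSymm g v E \ ℓ ⁻¹' T) +
        translationOverlap μ ((E \ ℓ ⁻¹' T).indicator g) ((ℓ ⁻¹' T \ E).indicator g) (r • v) ≤
      μ.withDensity g (E \ ℓ ⁻¹' T) := by
  have hH : MeasurableSet (ℓ ⁻¹' T) := ℓ.measurable hT.ordConnected.measurableSet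
  have hSH := (measurableSet_lineSymm hg v hE).diff hH
  have hEH := hE.diff hH
  have hHE : MeasurableSet (ℓ ⁻¹' T \ E) := hH.diff hE
  have hgSH := hg.indicator hSH
  have hgEH := hg.indicator hEH
  have hgHE := hg.indicator hHE
  have hv0 : v ≠ 0 := by rintro rfl; simp at hv
  rw [withDensity_apply _ hSH, withDensity_apply _ hEH, ← lintegral_indicator hSH,
    ← lintegral_indicator hEH, translationOverlap, ← lintegral_add_left hgSH]
  refine lintegral_mono_of_forall_line μ hg hfin
    (hgSH.add (hgEH.min (hgHE.comp (measurable_add_const _)))) hgEH hv0 fun z hz => ?_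
  rw [lintegral_add_left (by fun_prop),
    ← lineMeasure_preimage g v z hSH, ← lineMeasure_preimage g v z hEH]
  have htrace : IsUpperSet ((fun s : ℝ => z + s • v) ⁻¹' (ℓ ⁻¹' T)) := fun s t hst hs => by
    refine hT ?_ hs
    simpa using mul_le_mul_of_nonneg_right hst hv.le
  have hgain := measure_halfLineOfMass_sdiff_add_min_le (lineMeasure g v z)
    (measurable_add_smul v z hE) htrace
  rw [← preimage_lineSymm, ← preimage_sdiff, ← preimage_sdiff, ← preimage_sdiff] at hgain
  refine (add_le_add_right (le_min ?_ ?_) _).trans hgain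
  · rw [lineMeasure_preimage g v z hEH]
    exact lintegral_mono fun s => min_le_left _ _
  · rw [lineMeasure_preimage g v z hHE,
      ← lintegral_add_right_eq_self (fun s : ℝ => (ℓ ⁻¹' T \ E).indicator g (z + s • v)) r]
    refine lintegral_mono fun s => (min_le_right _ _).trans_eq ?_
    rw [add_smul, add_assoc]

end SymmetrizationGain

lemma ehrhard1D_one (ν : Measure ℝ) [NullSingletonClass ν] (A : Set ℝ) :
    ehrhard1D ν 1 A = halfLineOfMass ν (ν A) := by
  rw [← upperBounds_lowerBounds_setOf_measure_Ici_le]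
  simp only [ehrhard1D, one_mul]
  rfl

lemma ehrhardSymm_eq_lineSymm {n : ℕ} (f : En n → ℝ) (v : En n) (E : Set (En n)) :
    ehrhardSymm f v E = lineSymm (fun x => ENNReal.ofReal (f x)) v E := by
  ext z
  have h := congrArg (⟪z, v⟫ ∈ ·) (preimage_lineSymm (fun x => ENNReal.ofReal (f x)) v
    (z - ⟪z, v⟫ • v) E)
  rw [mem_preimage, sub_add_cancel, ← ehrhard1D_one] at h
  exact h.symm.to_iff

/-! ### Approximation of half-spaces -/

lemma exists_nat_measure_lt_lt {α : Type*} [MeasurableSpace α] {ν : Measure α}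
    [IsFiniteMeasure ν] {f : α → ℝ≥0∞} (hf : AEMeasurable f ν) (hfin : ∀ᵐ x ∂ν, f x < ⊤)
    {ε : ℝ≥0∞} (hε : ε ≠ 0) : ∃ R : ℕ, ν {x | (R : ℝ≥0∞) < f x} < ε := by
  have hlim := tendsto_measure_iInter_atTop (μ := ν) (s := fun R : ℕ => {x | (R : ℝ≥0∞) < f x})
    (fun R => nullMeasurableSet_lt aemeasurable_const hf)
    (fun i j hij x (hx : (j : ℝ≥0∞) < f x) => (Nat.cast_le.2 hij).trans_lt hx)
    ⟨0, measure_ne_top _ _⟩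
  have hnull : ν (⋂ R : ℕ, {x | (R : ℝ≥0∞) < f x}) = 0 := by
    refine measure_mono_null (t := {x | ¬f x < ⊤}) (fun x hx => ?_) hfin
    intro hlt
    obtain ⟨R, hR⟩ := ENNReal.exists_nat_gt hlt.ne
    exact hR.not_gt (mem_iInter.1 hx R)
  rw [hnull] at hlim
  exact (hlim.eventually_lt_const (pos_iff_ne_zero.2 hε)).exists

lemma translationOverlap_sdiff_eq_zero {V : Type*} [NormedAddCommGroup V] [NormedSpace ℝ V]
    [MeasurableSpace V] (μ : Measure V) (g : V → ℝ≥0∞) {ℓ : V →L[ℝ] ℝ} {w : V}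
    (hw : ℓ w ≤ 0) {T : Set ℝ} (hT : IsUpperSet T) (E : Set V) :
    translationOverlap μ ((E \ ℓ ⁻¹' T).indicator g) ((ℓ ⁻¹' T \ E).indicator g) w = 0 := by
  refine lintegral_eq_zero_of_ae_eq_zero (Eventually.of_forall fun x => ?_)
  by_cases hx : x ∈ ℓ ⁻¹' T
  · simp [hx]
  · have hxw : x + w ∉ ℓ ⁻¹' T := fun h => hx (hT (by simpa using hw) h)
    simp [hxw]

section Approximation

variable {V : Type*} [NormedAddCommGroup V] [NormedSpace ℝ V] [FiniteDimensional ℝ V]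
  [MeasurableSpace V] [BorelSpace V] (μ : Measure V) {g : V → ℝ≥0∞}

lemma exists_nat_half_le_withDensity_inter (hg : Measurable g) (hfin : ∫⁻ x, g x ∂μ ≠ ⊤)
    {q : ℝ≥0∞} (hq : q ≠ 0) :
    ∃ R : ℕ, ∀ A, q ≤ μ.withDensity g A →
      q / 2 ≤ μ.withDensity g (A ∩ {x | max (g x) ‖x‖ₑ ≤ R}) := by
  have : IsFiniteMeasure (μ.withDensity g) := isFiniteMeasure_withDensity hfin
  have hmax : Measurable fun x => max (g x) ‖x‖ₑ := by fun_prop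
  have hgfin : ∀ᵐ x ∂μ.withDensity g, max (g x) ‖x‖ₑ < ⊤ :=
    (withDensity_absolutelyContinuous μ g).ae_le <|
      (ae_lt_top hg hfin).mono fun x hx => max_lt hx enorm_lt_top
  obtain ⟨R, hR⟩ := exists_nat_measure_lt_lt hmax.aemeasurable hgfin (ENNReal.half_pos hq).ne'
  refine ⟨R, fun A hA => ?_⟩
  set G : Set V := {x | max (g x) ‖x‖ₑ ≤ R}
  have hG : MeasurableSet G := measurableSet_le hmax measurable_const
  have hcompl : Gᶜ = {x | (R : ℝ≥0∞) < max (g x) ‖x‖ₑ} := by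
    simp only [G, compl_ofPred, not_le]
  have hout : μ.withDensity g (A \ G) ≤ q / 2 :=
    (measure_mono (sdiff_subset_compl A G)).trans (hcompl ▸ hR.le)
  have hqtop : q ≠ ⊤ := ne_top_of_le_ne_top (measure_ne_top _ A) hA
  refine (ENNReal.add_le_add_iff_right (ENNReal.div_ne_top hqtop two_ne_zero)).1 ?_
  calc q / 2 + q / 2 ≤ μ.withDensity g A := (ENNReal.add_halves q).trans_le hA
    _ = μ.withDensity g (A ∩ G) + μ.withDensity g (A \ G) := (measure_inter_add_sdiff A hG).symm
    _ ≤ μ.withDensity g (A ∩ G) + q / 2 := add_le_add_right hout _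

variable [μ.IsAddHaarMeasure]

-- Integrate the overlap over all translations carrying the support of `a` to that of `b`.
lemma lintegral_mul_lintegral_le_of_translationOverlap_le {a b : V → ℝ≥0∞} (ha : Measurable a)
    (hb : Measurable b) {M : ℝ≥0∞} {R : ℝ} (haM : ∀ x, a x ≤ M)
    (hbM : ∀ x, b x ≤ M) (haR : ∀ x, R < ‖x‖ → a x = 0)
    (hbR : ∀ x, R < ‖x‖ → b x = 0) {δ : ℝ≥0∞} (hδ : ∀ w, translationOverlap μ a b w ≤ δ) :
    (∫⁻ x, a x ∂μ) * ∫⁻ x, b x ∂μ ≤ μ (Metric.closedBall 0 (2 * R)) * (M * δ) := by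
  have hpoint : ∀ x w, a x * b (x + w) ≤ (Metric.closedBall (0 : V) (2 * R)).indicator
      (fun w => M * min (a x) (b (x + w))) w := fun x w => by
    rcases lt_or_ge R ‖x‖ with hx | hx
    · simp [haR x hx]
    rcases lt_or_ge R ‖x + w‖ with hxw | hxw
    · simp [hbR _ hxw]
    have hw : ‖w‖ ≤ 2 * R := by
      simpa using (norm_sub_le (x + w) x).trans (by linarith)
    rw [indicator_of_mem (mem_closedBall_zero_iff.2 hw)]
    rcases le_total (a x) (b (x + w)) with h | h
    · rw [min_eq_left h, mul_comm]
      exact mul_le_mul_left (hbM _) _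
    · rw [min_eq_right h]
      exact mul_le_mul_left (haM _) _
  have hball : MeasurableSet (Metric.closedBall (0 : V) (2 * R)) := measurableSet_closedBall
  calc (∫⁻ x, a x ∂μ) * ∫⁻ x, b x ∂μ = ∫⁻ x, ∫⁻ w, a x * b (x + w) ∂μ ∂μ := by
        rw [← lintegral_mul_const _ ha]
        refine lintegral_congr fun x => ?_
        rw [lintegral_const_mul _ (by fun_prop), lintegral_add_left_eq_self]
    _ = ∫⁻ w, ∫⁻ x, a x * b (x + w) ∂μ ∂μ := lintegral_lintegral_swap (by fun_prop)
    _ ≤ ∫⁻ w, (Metric.closedBall (0 : V) (2 * R)).indicator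
          (fun _ => M * δ) w ∂μ := by
        refine lintegral_mono fun w => (lintegral_mono fun x => hpoint x w).trans ?_
        by_cases hw : w ∈ Metric.closedBall (0 : V) (2 * R)
        · simp only [indicator_of_mem hw]
          rw [lintegral_const_mul _ (by fun_prop)]
          exact mul_le_mul_right (hδ w) _
        · simp [indicator_of_notMem hw]
    _ = μ (Metric.closedBall 0 (2 * R)) * (M * δ) := by
        rw [lintegral_indicator_const hball, mul_comm]

-- Densities and supports are bounded once the tails of `g`, carrying mass `q / 2`, are cut off.
lemma exists_mul_self_le_mul_of_translationOverlap_le (hg : Measurable g)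
    (hfin : ∫⁻ x, g x ∂μ ≠ ⊤) {q : ℝ≥0∞} (hq : q ≠ 0) :
    ∃ C ≠ ⊤, ∀ A B : Set V, MeasurableSet A → MeasurableSet B → ∀ δ : ℝ≥0∞,
      q ≤ μ.withDensity g A → q ≤ μ.withDensity g B →
      (∀ w, translationOverlap μ (A.indicator g) (B.indicator g) w ≤ δ) →
      q / 2 * (q / 2) ≤ C * δ := by
  obtain ⟨R, hR⟩ := exists_nat_half_le_withDensity_inter μ hg hfin hq
  set G : Set V := {x | max (g x) ‖x‖ₑ ≤ R}
  have hG : MeasurableSet G := measurableSet_le (by fun_prop) measurable_const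
  have hbound : ∀ (A : Set V) x, (A ∩ G).indicator g x ≤ R := fun A =>
    indicator_le' (fun x hx => (le_max_left _ _).trans hx.2) fun _ _ => zero_le
  have hsupp : ∀ (A : Set V) x, (R : ℝ) < ‖x‖ → (A ∩ G).indicator g x = 0 := fun A x hx => by
    refine indicator_of_notMem (fun hxG => hx.not_ge ?_) g
    have hnorm : ‖x‖ₑ ≤ ENNReal.ofReal R := by
      simpa using (le_max_right _ _).trans hxG.2
    rwa [← ofReal_norm, ENNReal.ofReal_le_ofReal_iff (Nat.cast_nonneg R)] at hnorm
  have hmono : ∀ A : Set V, (A ∩ G).indicator g ≤ A.indicator g := fun A =>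
    indicator_le_indicator_of_subset inter_subset_left fun _ => zero_le
  refine ⟨μ (Metric.closedBall 0 (2 * R)) * R,
    ENNReal.mul_ne_top measure_closedBall_lt_top.ne (by simp), fun A B hA hB δ hqA hqB hδ => ?_⟩
  calc q / 2 * (q / 2)
      ≤ (∫⁻ x, (A ∩ G).indicator g x ∂μ) * ∫⁻ x, (B ∩ G).indicator g x ∂μ := by
        rw [lintegral_indicator (hA.inter hG), lintegral_indicator (hB.inter hG),
          ← withDensity_apply _ (hA.inter hG), ← withDensity_apply _ (hB.inter hG)]
        exact mul_le_mul' (hR A hqA) (hR B hqB)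
    _ ≤ μ (Metric.closedBall 0 (2 * R)) * (R * δ) :=
        lintegral_mul_lintegral_le_of_translationOverlap_le μ (hg.indicator (hA.inter hG))
          (hg.indicator (hB.inter hG)) (hbound A) (hbound B) (hsupp A) (hsupp B) fun w =>
          (lintegral_mono fun x => min_le_min (hmono A x) (hmono B _)).trans (hδ w)
    _ = μ (Metric.closedBall 0 (2 * R)) * R * δ := (mul_assoc _ _ _).symm

lemma translationOverlap_sdiff_le (hg : Measurable g) (hfin : ∫⁻ x, g x ∂μ ≠ ⊤) (ℓ : V →L[ℝ] ℝ)
    {T : Set ℝ} (hT : IsUpperSet T) {E : Set V} (hE : MeasurableSet E) {q δ : ℝ≥0∞} (hq : q ≠ ⊤)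
    (hEδ : μ.withDensity g (E \ ℓ ⁻¹' T) ≤ q + δ)
    (hsymm : ∀ v : V, ‖v‖ = 1 → q ≤ μ.withDensity g (lineSymm g v E \ ℓ ⁻¹' T)) (w : V) :
    translationOverlap μ ((E \ ℓ ⁻¹' T).indicator g) ((ℓ ⁻¹' T \ E).indicator g) w ≤ δ := by
  rcases le_or_gt (ℓ w) 0 with hw | hw
  · rw [translationOverlap_sdiff_eq_zero μ g hw hT]
    exact zero_le
  have hw0 : w ≠ 0 := by rintro rfl; simp at hw
  have hgain := withDensity_lineSymm_sdiff_add_translationOverlap_le μ hg hfin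
    (ℓ := ℓ) (v := ‖w‖⁻¹ • w) (by simp [hw0, hw]) hT hE ‖w‖
  rw [smul_inv_smul₀ (norm_ne_zero_iff.2 hw0)] at hgain
  refine (ENNReal.add_le_add_iff_left hq).1 (le_trans ?_ (hgain.trans hEδ))
  exact add_le_add_left (hsymm _ (norm_smul_inv_norm hw0)) _

-- If the infimum `q` of the mass outside `ℓ ⁻¹' T` were positive, nearly optimal sets would have
-- small overlaps in every direction.
lemma exists_withDensity_sdiff_lt (hg : Measurable g) (hfin : ∫⁻ x, g x ∂μ ≠ ⊤) (ℓ : V →L[ℝ] ℝ)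
    {T : Set ℝ} (hT : IsUpperSet T) {𝓒 : Set (Set V)} (hne : 𝓒.Nonempty)
    (hmeas : ∀ E ∈ 𝓒, MeasurableSet E)
    (hmass : ∀ E ∈ 𝓒, μ.withDensity g E = μ.withDensity g (ℓ ⁻¹' T))
    (hsymm : ∀ E ∈ 𝓒, ∀ v : V, ‖v‖ = 1 → lineSymm g v E ∈ 𝓒) {ε : ℝ≥0∞} (hε : ε ≠ 0) :
    ∃ E ∈ 𝓒, μ.withDensity g (E \ ℓ ⁻¹' T) < ε := by
  have : IsFiniteMeasure (μ.withDensity g) := isFiniteMeasure_withDensity hfin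
  have hH : MeasurableSet (ℓ ⁻¹' T) := ℓ.measurable hT.ordConnected.measurableSet
  by_contra! hcon
  set q : ℝ≥0∞ := ⨅ E ∈ 𝓒, μ.withDensity g (E \ ℓ ⁻¹' T)
  have hqle : ∀ E ∈ 𝓒, q ≤ μ.withDensity g (E \ ℓ ⁻¹' T) := fun E hE => iInf₂_le E hE
  have hq0 : q ≠ 0 := ne_bot_of_le_ne_bot hε (le_iInf₂ hcon)
  have hqtop : q ≠ ⊤ := ne_top_of_le_ne_top (measure_ne_top _ _) (hqle _ hne.some_mem)
  obtain ⟨C, hC, hCq⟩ := exists_mul_self_le_mul_of_translationOverlap_le μ hg hfin hq0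
  obtain ⟨δ, hδ0, hδ⟩ := ENNReal.exists_nnreal_pos_mul_lt hC
    (mul_ne_zero (ENNReal.half_pos hq0).ne' (ENNReal.half_pos hq0).ne')
  obtain ⟨E, hE, hEδ⟩ : ∃ E ∈ 𝓒, μ.withDensity g (E \ ℓ ⁻¹' T) < q + δ := by
    have hlt : q < q + δ := ENNReal.lt_add_right hqtop (by simpa using hδ0.ne')
    simpa only [q, iInf_lt_iff, exists_prop] using hlt
  refine hδ.not_ge (mul_comm C _ ▸ hCq (E \ ℓ ⁻¹' T) (ℓ ⁻¹' T \ E) ((hmeas E hE).diff hH)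
    (hH.diff (hmeas E hE)) δ (hqle E hE) ?_ ?_)
  · rw [← measure_sdiff_comm_of_measure_eq (hmeas E hE) hH (hmass E hE)]
    exact hqle E hE
  · exact translationOverlap_sdiff_le μ hg hfin ℓ hT (hmeas E hE) hqtop hEδ.le fun v hv =>
      hqle _ (hsymm E hE v hv)

end Approximation

/-! ### Weak derivatives vanish where a nonnegative function does -/

lemma continuous_fderiv_apply_const {V W : Type*} [NormedAddCommGroup V] [NormedSpace ℝ V]
    [NormedAddCommGroup W] [NormedSpace ℝ W] {ψ : V → W} (hψ : ContDiff ℝ 1 ψ) (e : V) :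
    Continuous fun x => fderiv ℝ ψ x e :=
  (hψ.continuous_fderiv one_ne_zero).clm_apply continuous_const

lemma intervalIntegral_fderiv_sub_smul {V : Type*} [NormedAddCommGroup V] [NormedSpace ℝ V]
    {ψ : V → ℝ} (hψ : ContDiff ℝ 1 ψ) (y e : V) (h : ℝ) :
    ∫ s in 0..h, fderiv ℝ ψ (y - s • e) e = ψ y - ψ (y - h • e) := by
  have hderiv : ∀ s ∈ uIcc 0 h,
      HasDerivAt (fun s : ℝ => -ψ (y - s • e)) (fderiv ℝ ψ (y - s • e) e) s := fun s _ => by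
    have hline : HasDerivAt (fun s : ℝ => y - s • e) (-e) s := by
      simpa using ((hasDerivAt_id s).smul_const e).const_sub y
    simpa [Function.comp_def] using
      ((hψ.differentiable one_ne_zero _).hasFDerivAt.comp_hasDerivAt s hline).fun_neg
  have hcont : Continuous fun s : ℝ => fderiv ℝ ψ (y - s • e) e :=
    (continuous_fderiv_apply_const hψ e).comp (by fun_prop)
  rw [intervalIntegral.integral_eq_sub_of_hasDerivAt hderiv (hcont.intervalIntegrable _ _)]
  simp [add_comm, sub_eq_add_neg]

instance isFiniteMeasure_restrict_uIoc (a b : ℝ) :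
    IsFiniteMeasure (volume.restrict (uIoc a b)) := by
  unfold uIoc
  infer_instance

section Translation

variable {V : Type*} [AddGroup V] [MeasurableSpace V] {μ : Measure V} [μ.IsAddRightInvariant]

lemma integral_comp_sub_mul [MeasurableAdd V] (ψ u : V → ℝ) (c : V) :
    ∫ x, ψ (x - c) * u x ∂μ = ∫ x, ψ x * u (x + c) ∂μ := by
  simpa using (integral_add_right_eq_self (μ := μ) (fun x => ψ (x - c) * u x) c).symm

lemma integral_mul_sub_comp_add [TopologicalSpace V] [IsTopologicalAddGroup V] [BorelSpace V]
    {ψ k : V → ℝ} (hk : Integrable k μ) (hψ : Continuous ψ) (hψc : HasCompactSupport ψ) (c : V) :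
    ∫ x, ψ x * (k (x + c) - k x) ∂μ = -∫ x, (ψ x - ψ (x - c)) * k x ∂μ := by
  obtain ⟨C, hC⟩ := hψc.exists_bound_of_continuous hψ
  have hψk : Integrable (fun x => ψ x * k x) μ :=
    hk.bdd_mul hψ.aestronglyMeasurable (Eventually.of_forall hC)
  have hψk_left : Integrable (fun x => ψ (x - c) * k x) μ :=
    hk.bdd_mul (hψ.comp (continuous_sub_right c)).aestronglyMeasurable
      (Eventually.of_forall fun x => hC _)
  have hψk_right : Integrable (fun x => ψ x * k (x + c)) μ :=
    (hk.comp_add_right c).bdd_mul hψ.aestronglyMeasurable (Eventually.of_forall hC)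
  simp_rw [mul_sub, sub_mul]
  rw [integral_sub hψk_right hψk, integral_sub hψk hψk_left, integral_comp_sub_mul, neg_sub]

end Translation

section WeakDerivative

variable {V : Type*} [NormedAddCommGroup V] [NormedSpace ℝ V] [MeasurableSpace V]

/-- `w` is the weak derivative of `k` in the direction `e` with respect to `μ`. Only the
integration by parts formula is recorded; integrability is assumed separately where needed. -/
def HasWeakDirDeriv (μ : Measure V) (k w : V → ℝ) (e : V) : Prop :=
  ∀ ψ : V → ℝ, ContDiff ℝ 1 ψ → HasCompactSupport ψ →
    ∫ x, fderiv ℝ ψ x e * k x ∂μ = -∫ x, ψ x * w x ∂μ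

variable [BorelSpace V] {μ : Measure V} {k w : V → ℝ} {e : V}

namespace HasWeakDirDeriv

lemma smul_contDiff (hkw : HasWeakDirDeriv μ k w e) (hk : LocallyIntegrable k μ)
    (hw : LocallyIntegrable w μ) {χ : V → ℝ} (hχ : ContDiff ℝ 1 χ) (hχc : HasCompactSupport χ) :
    HasWeakDirDeriv μ (fun x => χ x * k x) (fun x => fderiv ℝ χ x e * k x + χ x * w x) e := by
  intro ψ hψ hψc
  have hχ' := continuous_fderiv_apply_const hχ e
  have hψ' := continuous_fderiv_apply_const hψ e
  have hψk : Integrable (fun x => ψ x * fderiv ℝ χ x e * k x) μ :=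
    hk.integrable_smul_left_of_hasCompactSupport (hψ.continuous.mul hχ') hψc.mul_right
  have hψw : Integrable (fun x => ψ x * χ x * w x) μ :=
    hw.integrable_smul_left_of_hasCompactSupport (hψ.continuous.mul hχ.continuous) hψc.mul_right
  have hχk : Integrable (fun x => fderiv ℝ ψ x e * χ x * k x) μ :=
    hk.integrable_smul_left_of_hasCompactSupport (hψ'.mul hχ.continuous) hχc.mul_left
  have hprod : ∀ x, fderiv ℝ (fun x => ψ x * χ x) x e =
      ψ x * fderiv ℝ χ x e + fderiv ℝ ψ x e * χ x := fun x => by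
    simp [mul_comm (χ x), fderiv_fun_mul (hψ.differentiable one_ne_zero x)
      (hχ.differentiable one_ne_zero x)]
  have hparts := hkw (fun x => ψ x * χ x) (hψ.mul hχ) hψc.mul_right
  simp_rw [hprod, add_mul] at hparts
  rw [integral_add hψk hχk] at hparts
  simp_rw [mul_add, ← mul_assoc]
  rw [integral_add hψk hψw]
  linarith

lemma integral_fderiv_sub_mul [μ.IsAddRightInvariant] (hkw : HasWeakDirDeriv μ k w e)
    {ψ : V → ℝ} (hψ : ContDiff ℝ 1 ψ) (hψc : HasCompactSupport ψ) (c : V) :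
    ∫ x, fderiv ℝ ψ (x - c) e * k x ∂μ = -∫ x, ψ x * w (x + c) ∂μ := by
  simpa only [fderiv_comp_sub, integral_comp_sub_mul] using
    hkw (fun x => ψ (x - c)) (hψ.comp (contDiff_id.sub contDiff_const))
      (hψc.comp_homeomorph (Homeomorph.subRight c))

end HasWeakDirDeriv

variable [FiniteDimensional ℝ V] [μ.IsAddHaarMeasure]

lemma integrable_comp_add_smul (hw : Integrable w μ) (e : V) (ν : Measure ℝ)
    [IsFiniteMeasure ν] : Integrable (fun p : ℝ × V => w (p.2 + p.1 • e)) (ν.prod μ) := by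
  have hshear : MeasurePreserving (fun p : ℝ × V => (p.1, p.2 + p.1 • e)) (ν.prod μ)
      (ν.prod μ) :=
    (MeasurePreserving.id ν).skew_product (g := fun s x => x + s • e) (by fun_prop) <|
      Eventually.of_forall fun s => map_add_right_eq_self μ (s • e)
  exact hshear.integrable_comp_of_integrable (hw.comp_snd ν)

lemma continuous_setIntegral_comp_add_smul (hw : Integrable w μ) (e : V) (A : Set V) :
    Continuous fun s : ℝ => ∫ x in A, w (x + s • e) ∂μ := by
  have hw1 : MemLp w 1 μ := memLp_one_iff_integrable.2 hw
  let shift : C(ℝ, C(V, V)) := ContinuousMap.curry ⟨fun p : ℝ × V => p.2 + p.1 • e, by fun_prop⟩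
  have hshift : ∀ s, MeasurePreserving (shift s) μ μ :=
    fun s => measurePreserving_add_right μ (s • e)
  have hLp : Continuous fun s => Lp.compMeasurePreserving (shift s) (hshift s) (hw1.toLp w) :=
    continuous_const.compMeasurePreservingLp shift.continuous hshift ENNReal.one_ne_top
  refine ((continuous_setIntegral A).comp hLp).congr fun s => integral_congr_ae ?_
  exact ae_restrict_of_ae (hw1.comp_measurePreserving (hshift s)).coeFn_toLp

namespace HasWeakDirDeriv

-- Integrate `s ↦ ∫ ψ(x) w(x + s e) dx = -∫ ∂ₑψ(x - s e) k(x) dx` over `[0, h]`.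
lemma integral_mul_sub (hkw : HasWeakDirDeriv μ k w e) (hk : Integrable k μ)
    (hw : Integrable w μ) {ψ : V → ℝ} (hψ : ContDiff ℝ 1 ψ) (hψc : HasCompactSupport ψ) (h : ℝ) :
    ∫ x, ψ x * (k (x + h • e) - k x) ∂μ = ∫ x, ψ x * (∫ s in 0..h, w (x + s • e)) ∂μ := by
  have hdψ := continuous_fderiv_apply_const hψ e
  obtain ⟨C, hC⟩ := hψc.exists_bound_of_continuous hψ.continuous
  obtain ⟨D, hD⟩ := (hψc.fderiv_apply ℝ e).exists_bound_of_continuous hdψ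
  have hswapk : Integrable (Function.uncurry fun (s : ℝ) x => fderiv ℝ ψ (x - s • e) e * k x)
      ((volume.restrict (uIoc 0 h)).prod μ) :=
    (hk.comp_snd _).bdd_mul
      (hdψ.comp (g := fun x => fderiv ℝ ψ x e) (f := fun p : ℝ × V => p.2 - p.1 • e)
        (by fun_prop)).aestronglyMeasurable (Eventually.of_forall fun p => hD _)
  have hswapw : Integrable (Function.uncurry fun (s : ℝ) x => ψ x * w (x + s • e))
      ((volume.restrict (uIoc 0 h)).prod μ) :=
    (integrable_comp_add_smul hw e _).bdd_mul
      (hψ.continuous.comp continuous_snd).aestronglyMeasurable (Eventually.of_forall fun p => hC _)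
  calc ∫ x, ψ x * (k (x + h • e) - k x) ∂μ
      = -∫ x, (ψ x - ψ (x - h • e)) * k x ∂μ :=
        integral_mul_sub_comp_add hk hψ.continuous hψc _
    _ = -∫ x, (∫ s in 0..h, fderiv ℝ ψ (x - s • e) e * k x) ∂μ := by
        simp_rw [intervalIntegral.integral_mul_const, intervalIntegral_fderiv_sub_smul hψ]
    _ = ∫ s in 0..h, ∫ x, ψ x * w (x + s • e) ∂μ := by
        simp_rw [← intervalIntegral_integral_swap hswapk, hkw.integral_fderiv_sub_mul hψ hψc,
          intervalIntegral.integral_neg, neg_neg]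
    _ = ∫ x, ψ x * (∫ s in 0..h, w (x + s • e)) ∂μ := by
        simp_rw [intervalIntegral_integral_swap hswapw, intervalIntegral.integral_const_mul]

lemma ae_sub_eq_intervalIntegral (hkw : HasWeakDirDeriv μ k w e) (hk : Integrable k μ)
    (hw : Integrable w μ) (h : ℝ) :
    ∀ᵐ x ∂μ, k (x + h • e) - k x = ∫ s in 0..h, w (x + s • e) := by
  have hincr : Integrable (fun x => ∫ s in 0..h, w (x + s • e)) μ := by
    simp_rw [intervalIntegral.intervalIntegral_eq_integral_uIoc]
    exact Integrable.fun_smul (if (0 : ℝ) ≤ h then (1 : ℝ) else -1)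
      (integrable_comp_add_smul hw e (volume.restrict (uIoc 0 h))).integral_prod_right
  refine ae_eq_of_integral_contDiff_smul_eq ((hk.comp_add_right _).sub hk).locallyIntegrable
    hincr.locallyIntegrable fun ψ hψ hψc => ?_
  exact hkw.integral_mul_sub hk hw (hψ.of_le (by exact_mod_cast le_top)) hψc h

-- The function `h ↦ ∫_A k(x + h e) dx` is nonnegative, vanishes at `0`, and has derivative
-- `∫_A w` there.
lemma setIntegral_eq_zero (hkw : HasWeakDirDeriv μ k w e) (hk : Integrable k μ)
    (hw : Integrable w μ) (hk0 : ∀ x, 0 ≤ k x) {A : Set V} (hAk : ∀ᵐ x ∂μ.restrict A, k x = 0) :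
    ∫ x in A, w x ∂μ = 0 := by
  have hincr : ∀ h : ℝ, ∫ x in A, k (x + h • e) ∂μ =
      ∫ s in 0..h, ∫ x in A, w (x + s • e) ∂μ := fun h => by
    have hint := integrable_comp_add_smul hw e (volume.restrict (uIoc 0 h))
    rw [intervalIntegral_integral_swap (hint.mono_measure
      (Measure.prod_mono le_rfl Measure.restrict_le_self))]
    refine integral_congr_ae ?_
    filter_upwards [hAk, ae_restrict_of_ae (hkw.ae_sub_eq_intervalIntegral hk hw h)] with x hx hxh
    rw [← hxh, hx, sub_zero]
  have hderiv : HasDerivAt (fun h : ℝ => ∫ x in A, k (x + h • e) ∂μ) (∫ x in A, w x ∂μ) 0 := by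
    simpa only [hincr, zero_smul, add_zero] using
      ((continuous_setIntegral_comp_add_smul hw e A).integral_hasStrictDerivAt 0 0).hasDerivAt
  refine IsLocalMin.hasDerivAt_eq_zero (Eventually.of_forall fun h => ?_) hderiv
  simpa [integral_eq_zero_of_ae hAk] using integral_nonneg fun x => hk0 (x + h • e)

lemma ae_eq_zero_of_integrable (hkw : HasWeakDirDeriv μ k w e) (hk : Integrable k μ)
    (hw : Integrable w μ) (hk0 : ∀ x, 0 ≤ k x) : ∀ᵐ x ∂μ, k x = 0 → w x = 0 := by
  have hZ : NullMeasurableSet {x | k x = 0} μ :=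
    nullMeasurableSet_eq_fun hk.aestronglyMeasurable.aemeasurable aemeasurable_const
  have hw0 : w =ᵐ[μ.restrict {x | k x = 0}] 0 := by
    refine hw.integrableOn.ae_eq_zero_of_forall_setIntegral_eq_zero fun s hs _ => ?_
    rw [Measure.restrict_restrict hs]
    refine hkw.setIntegral_eq_zero hk hw hk0 ?_
    exact ae_restrict_of_ae_restrict_of_subset inter_subset_right (ae_restrict_mem₀ hZ)
  exact (ae_restrict_iff'₀ hZ).1 hw0

-- Smooth cutoffs reduce the local statement to the integrable one.
lemma ae_eq_zero_of_nonneg (hkw : HasWeakDirDeriv μ k w e) (hk : LocallyIntegrable k μ)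
    (hw : LocallyIntegrable w μ) (hk0 : ∀ x, 0 ≤ k x) : ∀ᵐ x ∂μ, k x = 0 → w x = 0 := by
  have hball : ∀ R : ℕ, ∀ᵐ x ∂μ, ‖x‖ ≤ R → k x = 0 → w x = 0 := fun R => by
    let χ : ContDiffBump (0 : V) := ⟨R + 1, R + 2, by positivity, by linarith⟩
    have hχ : ContDiff ℝ 1 χ := χ.contDiff
    have hχ' := continuous_fderiv_apply_const hχ e
    have hχc : HasCompactSupport χ := χ.hasCompactSupport
    have hkχ := hk.integrable_smul_left_of_hasCompactSupport hχ.continuous hχc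
    have hwχ := (hk.integrable_smul_left_of_hasCompactSupport hχ' (hχc.fderiv_apply ℝ e)).add
      (hw.integrable_smul_left_of_hasCompactSupport hχ.continuous hχc)
    filter_upwards [(hkw.smul_contDiff hk hw hχ hχc).ae_eq_zero_of_integrable hkχ hwχ
      fun x => mul_nonneg χ.nonneg (hk0 x)] with x hx hxR hkx
    have hχx : χ x = 1 :=
      χ.one_of_mem_closedBall (mem_closedBall_zero_iff.2 (by linarith))
    simpa [hkx, hχx] using hx
  filter_upwards [ae_all_iff.2 hball] with x hx hkx
  obtain ⟨R, hR⟩ := exists_nat_ge ‖x‖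
  exact hx R hR hkx

end HasWeakDirDeriv

end WeakDerivative

/-! ### The gradient of the density vanishes where the density does -/

lemma dvg_smul_const {n : ℕ} {ψ : En n → ℝ} {x : En n} (hψ : DifferentiableAt ℝ ψ x) (e : En n) :
    dvg (fun y => ψ y • e) x = fderiv ℝ ψ x e := by
  have he : e = ∑ i, e i • EuclideanSpace.single i (1 : ℝ) := by
    simpa using ((EuclideanSpace.basisFun (Fin n) ℝ).sum_repr e).symm
  conv_rhs => rw [he]
  simp [dvg, fderiv_smul_const hψ, mul_comm]

lemma HasWeakGrad.hasWeakDirDeriv {n : ℕ} {f : En n → ℝ} {f' : En n → En n}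
    (h : HasWeakGrad f f') (e : En n) : HasWeakDirDeriv volume f (fun x => ⟪e, f' x⟫) e := by
  intro ψ hψ hψc
  have hparts := h.2.2 (fun x => ψ x • e) (hψ.smul contDiff_const) hψc.smul_right
  simpa only [dvg_smul_const (hψ.differentiable one_ne_zero _), real_inner_smul_left,
    mul_comm (f _)] using hparts

lemma MemW.ae_weakGrad_eq_zero {n : ℕ} {f : En n → ℝ} {f' : En n → En n} (hW : MemW f f') :
    ∀ᵐ x, f x = 0 → f' x = 0 := by
  obtain ⟨hf0, -, hgrad⟩ := hW
  have hcoord : ∀ i, ∀ᵐ x, f x = 0 → ⟪EuclideanSpace.single i 1, f' x⟫ = 0 := fun i => by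
    refine (hgrad.hasWeakDirDeriv _).ae_eq_zero_of_nonneg hgrad.1 (fun x => ?_) hf0
    obtain ⟨s, hs, hint⟩ := hgrad.2.1 x
    exact ⟨s, hs, (innerSL ℝ (EuclideanSpace.single i (1 : ℝ))).integrable_comp hint⟩
  filter_upwards [ae_all_iff.2 hcoord] with x hx hfx
  ext i
  simpa [EuclideanSpace.inner_single_left] using hx i hfx

/-! ### Lower semicontinuity of the weighted perimeter -/

section Convergence

variable {α ι : Type*} [MeasurableSpace α] {l : Filter ι}

lemma withDensity_absolutelyContinuous_withDensity {μ : Measure α} {g h : α → ℝ≥0∞}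
    (hg : AEMeasurable g μ) (hgh : ∀ᵐ x ∂μ, g x = 0 → h x = 0) :
    μ.withDensity h ≪ μ.withDensity g := by
  refine .mk fun s hs hgs => ?_
  rw [withDensity_apply _ hs, lintegral_eq_zero_iff' hg.restrict] at hgs
  rw [withDensity_apply _ hs, ← lintegral_zero]
  refine lintegral_congr_ae ?_
  filter_upwards [hgs, ae_restrict_of_ae hgh] with x hgx hghx using hghx hgx

lemma tendsto_measure_zero_of_absolutelyContinuous {μ ν : Measure α} [SigmaFinite μ]
    [IsFiniteMeasure ν] (hνμ : ν ≪ μ) {s : ι → Set α}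
    (hs : Tendsto (fun i => μ (s i)) l (𝓝 0)) : Tendsto (fun i => ν (s i)) l (𝓝 0) := by
  simpa only [Measure.setLIntegral_rnDeriv hνμ] using
    tendsto_setLIntegral_zero (Measure.lintegral_rnDeriv_lt_top ν μ).ne hs

lemma tendsto_setIntegral_of_tendsto_symmDiff {μ : Measure α} {h : α → ℝ} (hh : Integrable h μ)
    {E : ι → Set α} {H : Set α} (hE : ∀ i, MeasurableSet (E i)) (hH : MeasurableSet H)
    (hlim : Tendsto (fun i => μ.withDensity (fun x => ‖h x‖ₑ) (symmDiff (E i) H)) l (𝓝 0)) :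
    Tendsto (fun i => ∫ x in E i, h x ∂μ) l (𝓝 (∫ x in H, h x ∂μ)) := by
  simp_rw [← integral_indicator (hE _), ← integral_indicator hH]
  refine tendsto_integral_of_L1 _ (hh.indicator hH).aestronglyMeasurable
    (Eventually.of_forall fun i => hh.indicator (hE i)) (hlim.congr fun i => ?_)
  have hEH : MeasurableSet (symmDiff (E i) H) := (hE i).symmDiff hH
  rw [withDensity_apply _ hEH, ← lintegral_indicator hEH]
  congr 1 with x
  rw [← enorm_indicator_eq_indicator_enorm, apply_indicator_symmDiff enorm_neg]

end Convergence

section Semicontinuity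

variable {n : ℕ} {f : En n → ℝ} {f' : En n → En n}

/-- The divergence `div (f φ) = f div φ + φ · ∇f` of the weighted field `f φ`, whose integrals over
`E` define the weighted perimeter of `E`. -/
def weightedDvg (f : En n → ℝ) (f' φ : En n → En n) (x : En n) : ℝ :=
  f x * dvg φ x + ⟪φ x, f' x⟫

lemma isFiniteMeasure_muM (hf : Integrable f) : IsFiniteMeasure (muM f) :=
  isFiniteMeasure_withDensity hf.lintegral_lt_top.ne

lemma continuous_dvg {φ : En n → En n} (hφ : ContDiff ℝ 1 φ) : Continuous (dvg φ) :=
  continuous_finsetSum _ fun i _ =>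
    (EuclideanSpace.proj (𝕜 := ℝ) i).continuous.comp (continuous_fderiv_apply_const hφ _)

lemma hasCompactSupport_dvg {φ : En n → En n} (hφ : HasCompactSupport φ) :
    HasCompactSupport (dvg φ) := by
  refine (hφ.fderiv ℝ).mono fun x hx hx0 => hx ?_
  simp [dvg, hx0]

lemma integrable_inner_of_hasCompactSupport {φ G : En n → En n} (hφ : Continuous φ)
    (hφc : HasCompactSupport φ) (hG : LocallyIntegrable G) : Integrable fun x => ⟪φ x, G x⟫ := by
  obtain ⟨C, hC⟩ := hφc.exists_bound_of_continuous hφ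
  have hGφ : IntegrableOn G (tsupport φ) := hG.integrableOn_isCompact hφc
  refine (integrableOn_iff_integrable_of_support_subset fun x hx => ?_).1
    ((hGφ.norm.const_mul C).mono' (hφ.aestronglyMeasurable.inner hGφ.1) (.of_forall fun x => ?_))
  · exact subset_tsupport φ fun hφx => hx (by simp [hφx])
  · exact (norm_inner_le_norm _ _).trans (mul_le_mul_of_nonneg_right (hC x) (norm_nonneg _))

lemma MemW.integrable_weightedDvg (hW : MemW f f') {φ : En n → En n} (hφ : ContDiff ℝ 1 φ)
    (hφc : HasCompactSupport φ) : Integrable (weightedDvg f f' φ) :=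
  (hW.2.2.1.integrable_smul_right_of_hasCompactSupport (continuous_dvg hφ)
    (hasCompactSupport_dvg hφc)).add
    (integrable_inner_of_hasCompactSupport hφ.continuous hφc hW.2.2.2.1)

lemma perim_congr (f : En n → ℝ) (f' : En n → En n) {E F : Set (En n)}
    (h : E =ᵐ[volume] F) : perim f f' univ E = perim f f' univ F := by
  have hind := indicator_ae_eq_of_ae_eq_set (f := fun _ => (1 : ℝ)) h
  refine iSup_congr fun φ => iSup_congr fun _ => congrArg ENNReal.ofReal (integral_congr_ae ?_)
  filter_upwards [ae_restrict_of_ae hind] with x hx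
  rw [hx]

lemma perim_univ_eq_iSup {E : Set (En n)} (hE : MeasurableSet E) :
    perim f f' univ E = ⨆ (φ : En n → En n) (_ : IsTestField univ φ),
      ENNReal.ofReal (∫ x in E, weightedDvg f f' φ x) := by
  refine iSup_congr fun φ => iSup_congr fun _ => ?_
  rw [Measure.restrict_univ, ← integral_indicator hE]
  congr 2 with x
  by_cases hx : x ∈ E <;> simp [hx, weightedDvg]

-- `div (f φ)` vanishes a.e. on `{f = 0}`, so `|div (f φ)| dx` is absolutely continuous
-- with respect to `μ`.
lemma MemW.tendsto_setIntegral_weightedDvg {ι : Type*} {l : Filter ι} (hW : MemW f f')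
    {φ : En n → En n} (hφ : ContDiff ℝ 1 φ) (hφc : HasCompactSupport φ) {E : ι → Set (En n)}
    {H : Set (En n)} (hE : ∀ i, MeasurableSet (E i)) (hH : MeasurableSet H)
    (hlim : Tendsto (fun i => muM f (symmDiff (E i) H)) l (𝓝 0)) :
    Tendsto (fun i => ∫ x in E i, weightedDvg f f' φ x) l
      (𝓝 (∫ x in H, weightedDvg f f' φ x)) := by
  have hint := hW.integrable_weightedDvg hφ hφc
  have : IsFiniteMeasure (muM f) := isFiniteMeasure_muM hW.2.1
  have : IsFiniteMeasure (volume.withDensity fun x => ‖weightedDvg f f' φ x‖ₑ) :=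
    isFiniteMeasure_withDensity hint.2.ne
  refine tendsto_setIntegral_of_tendsto_symmDiff hint hE hH
    (tendsto_measure_zero_of_absolutelyContinuous ?_ hlim)
  refine withDensity_absolutelyContinuous_withDensity
    hW.2.1.aestronglyMeasurable.aemeasurable.ennreal_ofReal ?_
  filter_upwards [hW.ae_weakGrad_eq_zero] with x hx hfx
  have hfx0 : f x = 0 := (ENNReal.ofReal_eq_zero.1 hfx).antisymm (hW.1 x)
  simp [weightedDvg, hfx0, hx hfx0]

lemma MemW.perim_le_of_tendsto {ι : Type*} {l : Filter ι} [l.NeBot] (hW : MemW f f')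
    {E : ι → Set (En n)} {H : Set (En n)} (hE : ∀ i, MeasurableSet (E i)) (hH : MeasurableSet H)
    (hlim : Tendsto (fun i => muM f (symmDiff (E i) H)) l (𝓝 0)) {P : ℝ≥0∞}
    (hP : ∀ i, perim f f' univ (E i) ≤ P) : perim f f' univ H ≤ P := by
  rw [perim_univ_eq_iSup hH]
  refine iSup₂_le fun φ hφ => le_of_tendsto'
    (ENNReal.tendsto_ofReal (hW.tendsto_setIntegral_weightedDvg hφ.1 hφ.2.1 hE hH hlim)) fun i => ?_
  refine le_trans ?_ (hP i)
  rw [perim_univ_eq_iSup (hE i)]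
  exact le_iSup₂_of_le φ hφ le_rfl

end Semicontinuity

/-! ### Half-spaces are minimal -/

section Competitors

variable {n : ℕ} {f : En n → ℝ} {f' : En n → En n} {m P : ℝ≥0∞}

/-- The measurable competitors of mass `m` and weighted perimeter at most `P`. For a PS measure and
finite `P` this class is stable under all symmetrizations. -/
def competitors (f : En n → ℝ) (f' : En n → En n) (m P : ℝ≥0∞) : Set (Set (En n)) :=
  {E | MeasurableSet E ∧ muM f E = m ∧ perim f f' univ E ≤ P}

lemma competitors_nonempty {F : Set (En n)} (hF : NullMeasurableSet F volume) :
    (competitors f f' (muM f F) (perim f f' univ F)).Nonempty := by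
  obtain ⟨F', -, hF'm, hF'⟩ := hF.exists_measurable_subset_ae_eq
  exact ⟨F', hF'm, measure_congr ((withDensity_absolutelyContinuous _ _).ae_eq hF'),
    (perim_congr f f' hF').le⟩

lemma IsPSMeasure.lineSymm_mem_competitors (hPS : IsPSMeasure f f') {g : En n → ℝ≥0∞}
    (hg : Measurable g) (hgfin : ∫⁻ x, g x ≠ ⊤)
    (hfg : (fun x => ENNReal.ofReal (f x)) =ᵐ[volume] g) (hP : P ≠ ⊤) {E : Set (En n)}
    (hE : E ∈ competitors f f' m P) {v : En n} (hv : ‖v‖ = 1) :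
    lineSymm g v E ∈ competitors f f' m P := by
  obtain ⟨hEmeas, hEm, hEP⟩ := hE
  have hv0 : v ≠ 0 := norm_ne_zero_iff.1 (hv ▸ one_ne_zero)
  refine ⟨measurableSet_lineSymm hg v hEmeas, ?_, ?_⟩
  · rw [← hEm, muM, withDensity_congr_ae hfg, withDensity_lineSymm volume hg hgfin hv0 hEmeas]
  · rw [← perim_congr f f' (lineSymm_ae_congr hfg v E), ← ehrhardSymm_eq_lineSymm]
    exact (hPS v hv E hEmeas.nullMeasurableSet (hEP.trans_lt hP.lt_top)).trans hEP

lemma IsPSMeasure.exists_muM_sdiff_lt (hPS : IsPSMeasure f f') (hf : Integrable f) (hP : P ≠ ⊤)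
    (ℓ : En n →L[ℝ] ℝ) {T : Set ℝ} (hT : IsUpperSet T)
    (hne : (competitors f f' (muM f (ℓ ⁻¹' T)) P).Nonempty) {ε : ℝ≥0∞} (hε : ε ≠ 0) :
    ∃ E ∈ competitors f f' (muM f (ℓ ⁻¹' T)) P, muM f (E \ ℓ ⁻¹' T) < ε := by
  obtain ⟨g, hg, hfg⟩ := hf.aestronglyMeasurable.aemeasurable.ennreal_ofReal
  have hgfin : ∫⁻ x, g x ≠ ⊤ := lintegral_congr_ae hfg ▸ hf.lintegral_lt_top.ne
  have hμ : muM f = volume.withDensity g := withDensity_congr_ae hfg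
  have hmass : ∀ E ∈ competitors f f' (muM f (ℓ ⁻¹' T)) P,
      volume.withDensity g E = volume.withDensity g (ℓ ⁻¹' T) := fun E hE => hμ ▸ hE.2.1
  simpa only [hμ] using exists_withDensity_sdiff_lt volume hg hgfin ℓ hT hne (fun E hE => hE.1)
    hmass (fun E hE v hv => hPS.lineSymm_mem_competitors hg hgfin hfg hP hE hv) hε

lemma MemW.perim_preimage_le (hW : MemW f f') (hPS : IsPSMeasure f f') (ℓ : En n →L[ℝ] ℝ)
    {T : Set ℝ} (hT : IsUpperSet T) {F : Set (En n)} (hF : NullMeasurableSet F volume)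
    (hFT : muM f F = muM f (ℓ ⁻¹' T)) : perim f f' univ (ℓ ⁻¹' T) ≤ perim f f' univ F := by
  by_cases hP : perim f f' univ F = ⊤
  · exact hP ▸ le_top
  have : IsFiniteMeasure (muM f) := isFiniteMeasure_muM hW.2.1
  have hH : MeasurableSet (ℓ ⁻¹' T) := ℓ.measurable hT.ordConnected.measurableSet
  have hne : (competitors f f' (muM f (ℓ ⁻¹' T)) (perim f f' univ F)).Nonempty :=
    hFT ▸ competitors_nonempty hF
  choose E hE hEε using fun k : ℕ =>
    hPS.exists_muM_sdiff_lt hW.2.1 hP ℓ hT hne (ENNReal.inv_ne_zero.2 (ENNReal.natCast_ne_top k))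
  have hout : Tendsto (fun k => muM f (E k \ ℓ ⁻¹' T)) atTop (𝓝 0) :=
    tendsto_of_tendsto_of_tendsto_of_le_of_le tendsto_const_nhds
      ENNReal.tendsto_inv_nat_nhds_zero (fun _ => zero_le) fun k => (hEε k).le
  refine hW.perim_le_of_tendsto (l := atTop) (fun k => (hE k).1) hH ?_ fun k => (hE k).2.2
  have hsymmDiff : ∀ k, muM f (symmDiff (E k) (ℓ ⁻¹' T)) =
      muM f (E k \ ℓ ⁻¹' T) + muM f (E k \ ℓ ⁻¹' T) := fun k => by
    rw [measure_symmDiff_eq (hE k).1.nullMeasurableSet hH.nullMeasurableSet,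
      measure_sdiff_comm_of_measure_eq hH (hE k).1 (hE k).2.1.symm]
  simpa only [hsymmDiff, add_zero] using hout.add hout

end Competitors

section HalfSpaces

lemma nullSingletonClass_map {V : Type*} [NormedAddCommGroup V] [NormedSpace ℝ V]
    [LocallyCompactSpace V] [MeasurableSpace V] [BorelSpace V] {μ ν : Measure V}
    [μ.IsAddHaarMeasure] (hνμ : ν ≪ μ) {ℓ : V →L[ℝ] ℝ} (hℓ : ℓ ≠ 0) :
    NullSingletonClass (ν.map ℓ) := by
  have hsurj : Function.Surjective ℓ.toLinearMap :=
    LinearMap.surjective (ContinuousLinearMap.coe_injective.ne hℓ)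
  refine ⟨fun c => ?_⟩
  rw [Measure.map_apply ℓ.measurable (measurableSet_singleton c)]
  exact hνμ (measure_eq_zero_iff_ae_notMem.2
    ((ae_comp_linearMap_mem_iff ℓ.toLinearMap μ volume hsurj
      (measurableSet_singleton c).compl).2 (volume.ae_ne c)))

variable {n : ℕ} {f : En n → ℝ} {f' : En n → En n} {v : En n}

lemma nullSingletonClass_map_innerSL (f : En n → ℝ) (hv : ‖v‖ = 1) :
    NullSingletonClass ((muM f).map (innerSL ℝ v)) :=
  nullSingletonClass_map (withDensity_absolutelyContinuous _ _)
    (norm_ne_zero_iff.1 (by simp [hv]))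

lemma halfSpace_eq_preimage (v : En n) (c : ℝ) : halfSpace v c = innerSL ℝ v ⁻¹' Ici c := by
  ext x
  simp [halfSpace, real_inner_comm]

lemma halfSpaceOf_eq_preimage (f : En n → ℝ) (E : Set (En n)) (hv : ‖v‖ = 1) :
    halfSpaceOf f E v =
      innerSL ℝ v ⁻¹' halfLineOfMass ((muM f).map (innerSL ℝ v)) (muM f E) := by
  have := nullSingletonClass_map_innerSL f hv
  simp only [← upperBounds_lowerBounds_setOf_measure_Ici_le, halfSpaceOf, halfSpace_eq_preimage,
    Measure.map_apply (innerSL ℝ v).measurable measurableSet_Ici]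
  ext x
  simp [real_inner_comm, upperBounds, lowerBounds]

lemma muM_halfSpaceOf (hf : Integrable f) (E : Set (En n)) (hv : ‖v‖ = 1) :
    muM f (halfSpaceOf f E v) = muM f E := by
  have : IsFiniteMeasure (muM f) := isFiniteMeasure_muM hf
  have := nullSingletonClass_map_innerSL f hv
  rw [halfSpaceOf_eq_preimage f E hv, ← Measure.map_apply (innerSL ℝ v).measurable
    (measurableSet_halfLineOfMass _ _), measure_halfLineOfMass]
  rw [Measure.map_apply (innerSL ℝ v).measurable MeasurableSet.univ]
  exact measure_mono (subset_univ E)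

lemma measurableSet_halfSpaceOf (f : En n → ℝ) (E : Set (En n)) (hv : ‖v‖ = 1) :
    MeasurableSet (halfSpaceOf f E v) := by
  rw [halfSpaceOf_eq_preimage f E hv]
  exact (innerSL ℝ v).measurable (measurableSet_halfLineOfMass _ _)

lemma MemW.perim_halfSpaceOf_le (hW : MemW f f') (hPS : IsPSMeasure f f') (hv : ‖v‖ = 1)
    {E F : Set (En n)} (hF : NullMeasurableSet F volume) (hFE : muM f F = muM f E) :
    perim f f' univ (halfSpaceOf f E v) ≤ perim f f' univ F := by
  have hmass := muM_halfSpaceOf hW.2.1 E hv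
  rw [halfSpaceOf_eq_preimage f E hv] at hmass ⊢
  exact hW.perim_preimage_le hPS _ (isUpperSet_halfLineOfMass _ _) hF (hFE.trans hmass.symm)

lemma MemW.perim_halfSpace_le (hW : MemW f f') (hPS : IsPSMeasure f f') (v : En n) (c : ℝ)
    {F : Set (En n)} (hF : NullMeasurableSet F volume)
    (hFc : muM f F = muM f (halfSpace v c)) :
    perim f f' univ (halfSpace v c) ≤ perim f f' univ F := by
  rw [halfSpace_eq_preimage] at hFc ⊢
  exact hW.perim_preimage_le hPS _ (isUpperSet_Ici c) hF hFc

end HalfSpaces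

/-- **All half-spaces are minimal.** For a PS measure `μ = f·Lⁿ ∈ 𝒲(ℝⁿ)`, `n ≥ 2`:
the half-spaces `H_μ(E, η)` all have the same `μ`-perimeter, they minimize
`μ`-perimeter in their mass class, and in particular every half-space `H(u, c)`
minimizes `μ`-perimeter among sets of the same `μ`-measure. -/
theorem all_halfspaces_minimal {n : ℕ} (hn : 2 ≤ n) (f : En n → ℝ) (f' : En n → En n)
    (hW : MemW f f') (hPS : IsPSMeasure f f') :
    (∀ E : Set (En n), NullMeasurableSet E volume → ∀ v η : En n, ‖v‖ = 1 → ‖η‖ = 1 →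
      perim f f' univ (halfSpaceOf f E η) = perim f f' univ (halfSpaceOf f E v)) ∧
    (∀ E : Set (En n), NullMeasurableSet E volume → ∀ η : En n, ‖η‖ = 1 →
      ∀ F : Set (En n), NullMeasurableSet F volume → muM f F = muM f E →
        perim f f' univ (halfSpaceOf f E η) ≤ perim f f' univ F) ∧
    (∀ u : En n, ‖u‖ = 1 → ∀ c : ℝ,
      ∀ F : Set (En n), NullMeasurableSet F volume → muM f F = muM f (halfSpace u c) →
        perim f f' univ (halfSpace u c) ≤ perim f f' univ F) := by
  have hle : ∀ (E : Set (En n)) (v η : En n), ‖v‖ = 1 → ‖η‖ = 1 →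
      perim f f' univ (halfSpaceOf f E η) ≤ perim f f' univ (halfSpaceOf f E v) :=
    fun E v η hv hη => hW.perim_halfSpaceOf_le hPS hη
      (measurableSet_halfSpaceOf f E hv).nullMeasurableSet (muM_halfSpaceOf hW.2.1 E hv)
  exact ⟨fun E _ v η hv hη => (hle E v η hv hη).antisymm (hle E η v hη hv),
    fun _ _ _ hη _ hF hFE => hW.perim_halfSpaceOf_le hPS hη hF hFE,
    fun u _ c _ hF hFc => hW.perim_halfSpace_le hPS u c hF hFc⟩

end
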